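/- Let k ≥ 2 and let w be a nonempty word over Σ_k that is neither a power of the digit 0 nor a power of the digit k−1 (i.e. w ∉ {0}* ∪ {k−1}*), and let s = s_{k,w}. Then for all m ≥ 0, |s(m) − s(m+1)| ≤ 1. -/

import Mathlib

/-!
Adding `1` to `m` only changes a block of least significant digits: up to the missing leading
zero when `m = k ^ t - 1`, one has `(m)_k = u a (k-1)^t` and `(m+1)_k = u (a+1) 0^t` with
`a + 1 < k` (`digits_succ`). Occurrences of `w` inside `u` are common to both words. Since `w` is
not a power of `k-1`, its last letter different from `k-1` must be aligned with `a` in any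
occurrence in `(m)_k` that is not inside `u`, so there is at most one such occurrence; the same
holds for `(m+1)_k` since `w` is not a power of `0` (`occ_replicate_append`). Both counts thus lie
in `{occ w u, occ w u + 1}`.

The argument is carried out on the reversed words, that is, on `Nat.digits`, where the block
`c^t` is a prefix; `occ_reverse` justifies the passage.
-/

/-- Number of occurrences of `w` as a contiguous factor of `y`
(number of starting positions `0 ≤ i ≤ |y|-1` where `w` occurs). -/
def occ (w y : List ℕ) : ℕ :=
  ((List.range y.length).filter (fun i => w.isPrefixOf (y.drop i))).length

/-- Base-`k` representation of `m`, most significant digit first, with `(0)_k = 0`. -/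
def rep (k m : ℕ) : List ℕ := if m = 0 then [0] else (Nat.digits k m).reverse

/-- The `(k,w)`-digital sequence: number of occurrences of `w` in `(m)_k`. -/
def dseq (k : ℕ) (w : List ℕ) (m : ℕ) : ℕ := occ w (rep k m)

/-- The set of factors of length `n` of the sequence `a` all of whose letters are `≤ N`. -/
def factorSet (a : ℕ → ℕ) (n N : ℕ) : Set (List ℕ) :=
  { u | (∃ i, u = (List.range n).map fun j => a (i + j)) ∧ ∀ x ∈ u, x ≤ N }

/-- The `N`-factor complexity `P_a(n,N)`. -/
noncomputable def Pc (a : ℕ → ℕ) (n N : ℕ) : ℕ := Nat.card (factorSet a n N)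

/-- `F_a^{(1)}(n,N) = F_a(n,N) \ F_a(n,N-1)`. -/
def factorSet1 (a : ℕ → ℕ) (n N : ℕ) : Set (List ℕ) :=
  factorSet a n N \ factorSet a n (N - 1)

/-- First difference of the `N`-factor complexity in the variable `N`. -/
noncomputable def Pc1 (a : ℕ → ℕ) (n N : ℕ) : ℤ := (Pc a n N : ℤ) - (Pc a n (N - 1) : ℤ)

/-- Second difference of the `N`-factor complexity in the variable `N`. -/
noncomputable def Pc2 (a : ℕ → ℕ) (n N : ℕ) : ℤ := Pc1 a n N - Pc1 a n (N - 1)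

/-- The morphism `τ` on single letters: `τ(2i) = (2i)(2i+1)`, `τ(2i+1) = (2i+2)`. -/
def tauLetter (m : ℕ) : List ℕ := if m % 2 = 0 then [m, m + 1] else [m + 1]

/-- The morphism `τ` extended to finite words by concatenation. -/
def tauWord (u : List ℕ) : List ℕ := u.flatMap tauLetter

/-- Fibonacci numbers with `F_0 = F_1 = 1`. -/
def fibW : ℕ → ℕ
  | 0 => 1
  | 1 => 1
  | n + 2 => fibW (n + 1) + fibW n

/-- `φ(n) = max {k : F_k < n}`. -/
noncomputable def phi (n : ℕ) : ℕ := sSup {k | fibW k < n}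

/-- The infinite Fibonacci sequence `f = τ^∞(0)`: since `τ^{p}(0)` is a prefix of
`τ^{p+1}(0)` and `|τ^{n+1}(0)| = F_{n+2} > n`, the `n`-th letter of the fixed point is
the `n`-th letter of `τ^{n+1}(0)`. -/
def fibSeq (n : ℕ) : ℕ := (tauWord^[n + 1] [0]).getD n 0

/-- The set of factors of length `n` of a finite word `u` all of whose letters are `≤ N`. -/
def factorSetW (u : List ℕ) (n N : ℕ) : Set (List ℕ) :=
  { v | v.length = n ∧ v <:+: u ∧ ∀ x ∈ v, x ≤ N }

lemma occ_nil (w : List ℕ) : occ w [] = 0 := rfl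

lemma occ_cons (w : List ℕ) (x : ℕ) (y : List ℕ) :
    occ w (x :: y) = (if w <+: x :: y then 1 else 0) + occ w y := by
  unfold occ
  rw [List.length_cons, List.range_succ_eq_map, List.filter_cons, List.filter_map,
    List.drop_zero]
  have h : ((fun i => w.isPrefixOf ((x :: y).drop i)) ∘ Nat.succ)
      = fun i => w.isPrefixOf (y.drop i) := by
    funext i; simp
  rw [h]
  by_cases hp : w <+: x :: y
  · simp [hp]; omega
  · simp [hp]

lemma occ_snoc (w : List ℕ) (hw : w ≠ []) (y : List ℕ) (x : ℕ) :
    occ w (y ++ [x]) = occ w y + (if w <:+ y ++ [x] then 1 else 0) := by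
  induction y with
  | nil =>
    rw [List.nil_append, occ_cons, occ_nil]
    have : w <+: [x] ↔ w <:+ [x] := by
      rw [List.prefix_cons_iff, List.suffix_cons_iff]
      simp [hw]
    simp [this]
  | cons z y ih =>
    rw [List.cons_append, occ_cons, ih, occ_cons]
    have h1 : w <+: z :: (y ++ [x]) ↔ w = z :: (y ++ [x]) ∨ w <+: z :: y := by
      rw [← List.cons_append, List.prefix_concat_iff]
    have h2 : w <:+ z :: (y ++ [x]) ↔ w = z :: (y ++ [x]) ∨ w <:+ y ++ [x] :=
      List.suffix_cons_iff
    by_cases he : w = z :: (y ++ [x])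
    · have h3 : ¬ w <+: z :: y := fun h => by
        have := h.length_le; rw [he] at this; simp at this
      have h4 : ¬ w <:+ y ++ [x] := fun h => by
        have := h.length_le; rw [he] at this; simp at this
      rw [if_pos (h1.2 (Or.inl he)), if_pos (h2.2 (Or.inl he)), if_neg h3, if_neg h4]
      omega
    · simp only [h1, h2, he, false_or]
      omega

lemma occ_reverse (w : List ℕ) (hw : w ≠ []) (y : List ℕ) :
    occ w y.reverse = occ w.reverse y := by
  induction y with
  | nil => rfl
  | cons x y ih =>
    rw [List.reverse_cons, occ_snoc w hw, ih, occ_cons]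
    have : w <:+ y.reverse ++ [x] ↔ w.reverse <+: x :: y := by
      rw [← List.reverse_cons, ← List.reverse_prefix, List.reverse_reverse]
    simp only [this]
    omega

/-- Any word that is not a power of `c` is `c ^ j d v` with `d ≠ c`. -/
lemma exists_first_ne (c : ℕ) (w : List ℕ) (h : ¬ ∀ d ∈ w, d = c) :
    ∃ j d v, d ≠ c ∧ w = List.replicate j c ++ d :: v := by
  induction w with
  | nil => simp at h
  | cons x w ih =>
    by_cases hx : x = c
    · obtain ⟨j, d, v, hd, rfl⟩ := ih (fun h' => h (by simpa [hx] using h'))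
      exact ⟨j + 1, d, v, hd, by simp [hx, List.replicate_succ]⟩
    · exact ⟨0, x, w, hx, rfl⟩

lemma eq_of_replicate_prefix (c a d : ℕ) (ha : a ≠ c) (hd : d ≠ c) (v L : List ℕ) (j t : ℕ)
    (h : List.replicate j c ++ d :: v <+: List.replicate t c ++ a :: L) : j = t := by
  induction j generalizing t with
  | zero =>
    cases t with
    | zero => rfl
    | succ t => simp [List.replicate_succ, hd] at h
  | succ j ih =>
    cases t with
    | zero => simp [List.replicate_succ, ha.symm] at h
    | succ t =>
      rw [ih t (by simpa [List.replicate_succ] using h)]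

/-- At most one occurrence of `w` in `c ^ t a L` starts in the block `c ^ t a`: the first letter
of `w` different from `c` has to be aligned with `a`. -/
lemma occ_replicate_append (c a : ℕ) (ha : a ≠ c) (w L : List ℕ) (h : ¬ ∀ d ∈ w, d = c) (t : ℕ) :
    occ w L ≤ occ w (List.replicate t c ++ a :: L) ∧
      occ w (List.replicate t c ++ a :: L) ≤ occ w L + 1 := by
  obtain ⟨j, d, v, hd, hw⟩ := exists_first_ne c w h
  -- The bound has to record that the exceptional occurrence appears only once `t` reaches `j`.
  have key : occ w L ≤ occ w (List.replicate t c ++ a :: L) ∧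
      occ w (List.replicate t c ++ a :: L) ≤ occ w L + (if j ≤ t then 1 else 0) := by
    induction t with
    | zero =>
      have hp := eq_of_replicate_prefix c a d ha hd v L j 0
      rw [← hw] at hp
      rw [List.replicate_zero, List.nil_append, occ_cons] at *
      split_ifs at * <;> grind
    | succ t ih =>
      have hp := eq_of_replicate_prefix c a d ha hd v L j (t + 1)
      rw [← hw] at hp
      rw [List.replicate_succ, List.cons_append, occ_cons] at *
      split_ifs at * <;> grind
  refine ⟨key.1, key.2.trans ?_⟩
  split_ifs <;> omega

lemma occ_replicate (c : ℕ) (w : List ℕ) (h : ¬ ∀ d ∈ w, d = c) (t : ℕ) :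
    occ w (List.replicate t c) = 0 := by
  induction t with
  | zero => rfl
  | succ t ih =>
    rw [List.replicate_succ, occ_cons, ih, if_neg]
    intro hp
    rw [← List.replicate_succ] at hp
    exact h fun d hd => List.eq_of_mem_replicate (hp.subset hd)

/-- Adding one with carry on little-endian digits. The second alternative, `m = k ^ t - 1`, is
the case where the number of digits grows. -/
lemma digits_succ (k : ℕ) (hk : 2 ≤ k) (m : ℕ) :
    ∃ t a L, a + 1 < k ∧
      (Nat.digits k m = List.replicate t (k - 1) ++ a :: L ∨
        (L = [] ∧ Nat.digits k m = List.replicate t (k - 1))) ∧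
      Nat.digits k (m + 1) = List.replicate t 0 ++ (a + 1) :: L := by
  induction m using Nat.strong_induction_on with
  | _ m ih =>
    by_cases hm : m = 0
    · subst hm
      refine ⟨0, 0, [], by omega, Or.inr ⟨rfl, by simp⟩, ?_⟩
      rw [Nat.digits_of_lt k (0 + 1) (by omega) (by omega)]
      rfl
    · have hmod := Nat.mod_lt m (show 0 < k by omega)
      have hdm := Nat.div_add_mod m k
      have h1 : Nat.digits k m = m % k :: Nat.digits k (m / k) :=
        Nat.digits_def' (by omega) (by omega)
      by_cases hc : m % k + 1 < k
      · refine ⟨0, m % k, Nat.digits k (m / k), hc, Or.inl (by simpa using h1), ?_⟩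
        have : m + 1 = (m % k + 1) + k * (m / k) := by omega
        rw [this, Nat.digits_add k (by omega) _ _ hc (Or.inl (by omega))]
        rfl
      · obtain ⟨t, a, L, ha, hL, hs⟩ := ih (m / k) (Nat.div_lt_self (by omega) (by omega))
        have hr : m % k = k - 1 := by omega
        refine ⟨t + 1, a, L, ha, ?_, ?_⟩
        · rw [h1, hr]
          simpa [List.replicate_succ] using hL
        · have : m + 1 = 0 + k * (m / k + 1) := by
            rw [Nat.mul_add]; omega
          rw [this, Nat.digits_add k (by omega) _ _ (by omega) (Or.inr (Nat.succ_ne_zero (m / k))), hs]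
          rfl

theorem stmt16 (k : ℕ) (hk : 2 ≤ k) (w : List ℕ) (hw : w ≠ []) (hwk : ∀ d ∈ w, d < k)
    (hnp : ¬ ((∀ d ∈ w, d = 0) ∨ (∀ d ∈ w, d = k - 1))) (m : ℕ) :
    |(dseq k w m : ℤ) - (dseq k w (m + 1) : ℤ)| ≤ 1 := by
  obtain ⟨h0, h1⟩ := not_or.1 hnp
  have h0' : ¬ ∀ d ∈ w.reverse, d = 0 := by simpa using h0
  have h1' : ¬ ∀ d ∈ w.reverse, d = k - 1 := by simpa using h1
  obtain ⟨t, a, L, ha, hL, hs⟩ := digits_succ k hk m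
  have e2 : dseq k w (m + 1) = occ w.reverse (List.replicate t 0 ++ (a + 1) :: L) := by
    rw [dseq, rep, if_neg (by omega), occ_reverse w hw, hs]
  have b2 := occ_replicate_append 0 (a + 1) (by omega) w.reverse L h0' t
  have b1 : occ w.reverse L ≤ dseq k w m ∧ dseq k w m ≤ occ w.reverse L + 1 := by
    rcases hL with hL | ⟨rfl, hL⟩
    · have hm : m ≠ 0 := by
        rintro rfl
        simp at hL
      rw [dseq, rep, if_neg hm, occ_reverse w hw, hL]
      exact occ_replicate_append (k - 1) a (by omega) w.reverse L h1' t
    · rw [occ_nil]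
      refine ⟨Nat.zero_le _, ?_⟩
      by_cases hm : m = 0
      · rw [dseq, rep, if_pos hm]
        exact (occ_replicate 0 w h0 1).le.trans (Nat.zero_le _)
      · rw [dseq, rep, if_neg hm, occ_reverse w hw, hL, occ_replicate _ _ h1']
        exact Nat.zero_le _
  rw [abs_le]
  omega
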